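/- Let G be a finite non-complete connected simple graph with minimum degree δ(G) and connectivity k(G). If any two vertices at distance 2 have at most β common neighbors, then k(G) ≥ 2·δ(G)·κ_LLY^{(2)}(G) − β. -/

import Mathlib

/-!
Let `S` be a separating set of minimum size, splitting the remaining vertices into nonempty sides
`A` and `B` with no edges between them. Since `G` is connected, `S` contains some `s`, and by
minimality `s` has a neighbour `x ∈ A` and a neighbour `y ∈ B`: otherwise `s` could be moved to one
of the sides. Hence `d(x, y) = 2`.

The function equal to `1` on `A`, `0` on `S` and `-1` on `B` is 1-Lipschitz, so (the easy half of
Kantorovich duality) it bounds the Wasserstein distance from below: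
`W(μ_x^p, μ_y^p) ≥ 2 - (1 - p) (|N(x) ∩ S| / d_x + |N(y) ∩ S| / d_y)`. In the limit,
`2 δ κ(x, y) ≤ |N(x) ∩ S| + |N(y) ∩ S| ≤ |S| + |N(x) ∩ N(y)| ≤ |S| + β`.

The curvature is defined through `limUnder`, so the limit has to be shown to exist: mixing a
transport plan with the unit mass at `(x, y)` shows that the quotient defining the curvature is
nondecreasing in `p`, and the duality bound shows that it is bounded above.
-/

open Filter Finset

attribute [local instance] Classical.propDecidable

variable {V : Type*}

/-- The measure `μ_x^p`. -/
noncomputable def muP [Fintype V] (G : SimpleGraph V) (p : ℝ) (x : V) : V → ℝ :=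
  fun z => if z = x then p else if G.Adj x z then (1 - p) / (G.degree x) else 0

/-- A transport plan between two measures. -/
def IsTransportPlan [Fintype V] (μ₁ μ₂ : V → ℝ) (π : V → V → ℝ) : Prop :=
  (∀ u v, 0 ≤ π u v ∧ π u v ≤ 1) ∧
  (∀ u, ∑ v, π u v = μ₁ u) ∧ (∀ v, ∑ u, π u v = μ₂ v)

/-- The cost of a transport plan. -/
noncomputable def planCost [Fintype V] (G : SimpleGraph V) (π : V → V → ℝ) : ℝ :=
  ∑ u, ∑ v, (G.dist u v : ℝ) * π u v

/-- The Wasserstein distance between two measures on a graph. -/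
noncomputable def Wdist [Fintype V] (G : SimpleGraph V) (μ₁ μ₂ : V → ℝ) : ℝ :=
  sInf {c : ℝ | ∃ π, IsTransportPlan μ₁ μ₂ π ∧ c = planCost G π}

/-- The Lin-Lu-Yau curvature of a pair of vertices. -/
noncomputable def kappaLLY [Fintype V] (G : SimpleGraph V) (x y : V) : ℝ :=
  limUnder (nhdsWithin 1 (Set.Iio (1 : ℝ)))
    (fun p => (1 - Wdist G (muP G p x) (muP G p y) / (G.dist x y)) / (1 - p))

/-- `κ_LLY^{(i)}(G)`: infimum of the curvature over pairs at distance `i`. -/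
noncomputable def kappaLLYscale [Fintype V] (G : SimpleGraph V) (i : ℕ) : ℝ :=
  sInf {k : ℝ | ∃ x y : V, G.dist x y = i ∧ k = kappaLLY G x y}

/-- `κ_LLY(G)`: infimum of the curvature over adjacent pairs. -/
noncomputable def kappaLLYedge [Fintype V] (G : SimpleGraph V) : ℝ :=
  sInf {k : ℝ | ∃ x y : V, G.Adj x y ∧ k = kappaLLY G x y}

/-- The vertex connectivity `k(G)`. -/
noncomputable def vertexConnectivity [Fintype V] (G : SimpleGraph V) : ℕ :=
  sInf {n : ℕ | ∃ S : Finset V, S.card = n ∧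
    (¬ (G.induce ((S : Set V)ᶜ)).Connected ∨ ((S : Set V)ᶜ).Subsingleton)}

/-- The edge connectivity `k'(G)`. -/
noncomputable def edgeConnectivity [Fintype V] (G : SimpleGraph V) : ℕ :=
  sInf {n : ℕ | ∃ F : Finset (Sym2 V), F.card = n ∧ (F : Set (Sym2 V)) ⊆ G.edgeSet ∧
    ¬ (G.deleteEdges (F : Set (Sym2 V))).Connected}

/-- Amply regular graph with parameters `(d, α, β)`. -/
def IsAmplyRegular [Fintype V] (G : SimpleGraph V) (d α β : ℕ) : Prop :=
  G.IsRegularOfDegree d ∧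
  (∀ u v, G.Adj u v → (G.neighborFinset u ∩ G.neighborFinset v).card = α) ∧
  (∀ u v : V, G.dist u v = 2 → (G.neighborFinset u ∩ G.neighborFinset v).card = β)

/-- A matching given as a finite set of ordered pairs satisfying a constraint `P`. -/
def IsPairMatching (P : V → V → Prop) (M : Finset (V × V)) : Prop :=
  (∀ e ∈ M, P e.1 e.2) ∧
  ∀ e ∈ M, ∀ f ∈ M, e ≠ f → e.1 ≠ f.1 ∧ e.1 ≠ f.2 ∧ e.2 ≠ f.1 ∧ e.2 ≠ f.2

/-! ### Transport plans and weak duality -/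

lemma planCost_nonneg [Fintype V] (G : SimpleGraph V) {μ₁ μ₂ : V → ℝ} {π : V → V → ℝ}
    (h : IsTransportPlan μ₁ μ₂ π) : 0 ≤ planCost G π :=
  sum_nonneg fun u _ => sum_nonneg fun v _ => mul_nonneg (Nat.cast_nonneg _) (h.1 u v).1

lemma Wdist_le_planCost [Fintype V] (G : SimpleGraph V) {μ₁ μ₂ : V → ℝ} {π : V → V → ℝ}
    (h : IsTransportPlan μ₁ μ₂ π) : Wdist G μ₁ μ₂ ≤ planCost G π := by
  refine csInf_le ⟨0, ?_⟩ ⟨π, h, rfl⟩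
  rintro c ⟨π', h', rfl⟩
  exact planCost_nonneg G h'

lemma le_Wdist [Fintype V] (G : SimpleGraph V) {μ₁ μ₂ : V → ℝ} {c : ℝ}
    (hne : ∃ π, IsTransportPlan μ₁ μ₂ π)
    (h : ∀ π, IsTransportPlan μ₁ μ₂ π → c ≤ planCost G π) : c ≤ Wdist G μ₁ μ₂ := by
  obtain ⟨π, hπ⟩ := hne
  refine le_csInf ⟨_, π, hπ, rfl⟩ ?_
  rintro _ ⟨π', h', rfl⟩
  exact h π' h'

/-- The product measure is a transport plan. -/
lemma exists_isTransportPlan [Fintype V] {μ₁ μ₂ : V → ℝ} (h₁ : ∀ v, 0 ≤ μ₁ v)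
    (h₂ : ∀ v, 0 ≤ μ₂ v) (s₁ : ∑ v, μ₁ v = 1) (s₂ : ∑ v, μ₂ v = 1) :
    ∃ π, IsTransportPlan μ₁ μ₂ π := by
  have b₁ : ∀ v, μ₁ v ≤ 1 := fun v =>
    s₁ ▸ single_le_sum (f := μ₁) (fun i _ => h₁ i) (mem_univ v)
  have b₂ : ∀ v, μ₂ v ≤ 1 := fun v =>
    s₂ ▸ single_le_sum (f := μ₂) (fun i _ => h₂ i) (mem_univ v)
  refine ⟨fun u v => μ₁ u * μ₂ v, fun u v => ⟨mul_nonneg (h₁ u) (h₂ v),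
    mul_le_one₀ (b₁ u) (h₂ v) (b₂ v)⟩, fun u => ?_, fun v => ?_⟩
  · rw [← mul_sum, s₂, mul_one]
  · rw [← sum_mul, s₁, one_mul]

lemma sub_le_dist (G : SimpleGraph V) (hconn : G.Connected) {f : V → ℝ}
    (hf : ∀ u v, G.Adj u v → f u - f v ≤ 1) (u v : V) : f u - f v ≤ G.dist u v := by
  obtain ⟨w, hw⟩ := hconn.exists_walk_length_eq_dist u v
  rw [← hw]
  clear hw
  induction w with
  | nil => simp
  | cons h w ih =>
    have := hf _ _ h
    push_cast [SimpleGraph.Walk.length_cons]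
    linarith

/-- Weak Kantorovich duality. -/
lemma duality_le_planCost [Fintype V] (G : SimpleGraph V) (hconn : G.Connected) {f : V → ℝ}
    (hf : ∀ u v, G.Adj u v → f u - f v ≤ 1) {μ₁ μ₂ : V → ℝ} {π : V → V → ℝ}
    (h : IsTransportPlan μ₁ μ₂ π) :
    ∑ u, f u * μ₁ u - ∑ v, f v * μ₂ v ≤ planCost G π := by
  have e₁ : ∑ u, f u * μ₁ u = ∑ u, ∑ v, f u * π u v :=
    sum_congr rfl fun u _ => by rw [← h.2.1 u, mul_sum]
  have e₂ : ∑ v, f v * μ₂ v = ∑ u, ∑ v, f v * π u v := by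
    rw [sum_comm]
    exact sum_congr rfl fun v _ => by rw [← h.2.2 v, mul_sum]
  rw [e₁, e₂, ← sum_sub_distrib]
  refine sum_le_sum fun u _ => ?_
  rw [← sum_sub_distrib]
  refine sum_le_sum fun v _ => ?_
  rw [← sub_mul]
  exact mul_le_mul_of_nonneg_right (sub_le_dist G hconn hf u v) (h.1 u v).1

/-! ### The measures `μ_x^p` -/

lemma muP_nonneg [Fintype V] (G : SimpleGraph V) {p : ℝ} (h0 : 0 ≤ p) (h1 : p ≤ 1) (x v : V) :
    0 ≤ muP G p x v := by
  have : 0 ≤ 1 - p := by linarith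
  unfold muP
  split_ifs <;> positivity

lemma sum_mul_muP [Fintype V] (G : SimpleGraph V) (p : ℝ) (x : V) (f : V → ℝ) :
    ∑ z, f z * muP G p x z
      = p * f x + (1 - p) / G.degree x * ∑ z ∈ G.neighborFinset x, f z := by
  have : ∀ z, f z * muP G p x z = (if z = x then p * f x else 0)
      + (if G.Adj x z then (1 - p) / G.degree x * f z else 0) := by
    intro z
    unfold muP
    by_cases h : z = x
    · subst h; simp [mul_comm]
    · by_cases h' : G.Adj x z <;> simp [h, h', mul_comm]
  simp_rw [this]
  rw [sum_add_distrib, mul_sum]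
  congr 1
  · simp
  · rw [← sum_filter]
    exact sum_congr (by ext; simp) fun _ _ => rfl

lemma sum_muP [Fintype V] (G : SimpleGraph V) (p : ℝ) {x : V} (hx : 0 < G.degree x) :
    ∑ z, muP G p x z = 1 := by
  have h := sum_mul_muP G p x (fun _ => 1)
  have hd : (G.degree x : ℝ) ≠ 0 := by exact_mod_cast hx.ne'
  simp only [one_mul, sum_const, SimpleGraph.card_neighborFinset_eq_degree, nsmul_eq_mul,
    mul_one] at h
  rw [h]
  field_simp
  ring

lemma exists_plan_muP [Fintype V] (G : SimpleGraph V) {p : ℝ} (h0 : 0 ≤ p) (h1 : p ≤ 1) {x y : V}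
    (hx : 0 < G.degree x) (hy : 0 < G.degree y) :
    ∃ π, IsTransportPlan (muP G p x) (muP G p y) π :=
  exists_isTransportPlan (muP_nonneg G h0 h1 x) (muP_nonneg G h0 h1 y)
    (sum_muP G p hx) (sum_muP G p hy)

/-- `μ_x^q` is the mixture of `μ_x^p` and the unit mass at `x` with weight
`t = (1 - q) / (1 - p)` on the former. -/
lemma muP_mix [Fintype V] (G : SimpleGraph V) {p q t : ℝ} (ht : t * (1 - p) = 1 - q) (x v : V) :
    muP G q x v = t * muP G p x v + (1 - t) * (if v = x then 1 else 0) := by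
  unfold muP
  split_ifs
  · linarith
  · rw [← ht]; ring
  · ring

/-- Convexity of `p ↦ W(μ_x^p, μ_y^p)` between `p` and the endpoint `1`. -/
lemma Wdist_mix [Fintype V] (G : SimpleGraph V) {p q t : ℝ} (h0 : 0 ≤ p) (h1 : p ≤ 1)
    (t0 : 0 < t) (t1 : t ≤ 1) (ht : t * (1 - p) = 1 - q) {x y : V}
    (hx : 0 < G.degree x) (hy : 0 < G.degree y) :
    Wdist G (muP G q x) (muP G q y)
      ≤ t * Wdist G (muP G p x) (muP G p y) + (1 - t) * G.dist x y := by
  have key : (Wdist G (muP G q x) (muP G q y) - (1 - t) * G.dist x y) / t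
      ≤ Wdist G (muP G p x) (muP G p y) := by
    refine le_Wdist G (exists_plan_muP G h0 h1 hx hy) fun π hπ => ?_
    rw [div_le_iff₀ t0]
    have hplan : IsTransportPlan (muP G q x) (muP G q y)
        (fun u v => t * π u v + (1 - t) * (if u = x then if v = y then 1 else 0 else 0)) := by
      refine ⟨fun u v => ?_, fun u => ?_, fun v => ?_⟩
      · have := hπ.1 u v
        beta_reduce
        constructor
        · have : 0 ≤ t * π u v := mul_nonneg t0.le this.1
          split_ifs <;> linarith
        · have : t * π u v ≤ t * 1 := mul_le_mul_of_nonneg_left this.2 t0.le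
          split_ifs <;> linarith
      · rw [sum_add_distrib, ← mul_sum, ← mul_sum, hπ.2.1, muP_mix G ht]
        by_cases h : u = x <;> simp [h]
      · rw [sum_add_distrib, ← mul_sum, ← mul_sum, hπ.2.2, muP_mix G ht]
        simp
    have hcost : planCost G
        (fun u v => t * π u v + (1 - t) * (if u = x then if v = y then 1 else 0 else 0))
        = planCost G π * t + (1 - t) * G.dist x y := by
      unfold planCost
      have : ∀ u v, (G.dist u v : ℝ) *
          (t * π u v + (1 - t) * (if u = x then if v = y then 1 else 0 else 0))
          = G.dist u v * π u v * t
            + if u = x then (if v = y then (1 - t) * G.dist x y else 0) else 0 := by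
        intro u v
        split_ifs with h h'
        · subst h h'; ring
        · ring
        · ring
      simp_rw [this, sum_add_distrib, ← sum_mul]
      simp
    have := Wdist_le_planCost G hplan
    linarith
  rw [div_le_iff₀ t0] at key
  linarith

/-! ### Existence of the curvature -/

/-- If the quotient defining the curvature is bounded above by `C`, then, being nondecreasing
in `p`, it converges, and its limit is at most `C`. -/
lemma kappaLLY_le [Fintype V] (G : SimpleGraph V) {x y : V} {C : ℝ} (hd : 0 < G.dist x y)
    (hx : 0 < G.degree x) (hy : 0 < G.degree y)
    (hC : ∀ p ∈ Set.Ioo (0 : ℝ) 1,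
      (1 - Wdist G (muP G p x) (muP G p y) / (G.dist x y)) / (1 - p) ≤ C) :
    kappaLLY G x y ≤ C := by
  set F : ℝ → ℝ := fun p => (1 - Wdist G (muP G p x) (muP G p y) / (G.dist x y)) / (1 - p)
    with hF
  have hd' : (0 : ℝ) < G.dist x y := by exact_mod_cast hd
  have hmono : MonotoneOn F (Set.Ioo 0 1) := by
    rintro p ⟨hp0, hp1⟩ q ⟨hq0, hq1⟩ hpq
    have hp : 0 < 1 - p := by linarith
    have hq : 0 < 1 - q := by linarith
    have h := Wdist_mix G (t := (1 - q) / (1 - p)) hp0.le hp1.le (by positivity)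
      (by rw [div_le_one hp]; linarith) (by field_simp) hx hy
    simp only [hF]
    rw [div_le_div_iff₀ hp hq]
    field_simp at h ⊢
    nlinarith
  have hbdd : BddAbove (F '' Set.Ioo 0 1) := by
    refine ⟨C, ?_⟩
    rintro _ ⟨p, hp, rfl⟩
    exact hC p hp
  have hlim := hmono.tendsto_nhdsWithin_Ioo_left ⟨1 / 2, by norm_num⟩ hbdd
  have : kappaLLY G x y = sSup (F '' Set.Ioo 0 1) := hlim.limUnder_eq
  rw [this]
  refine csSup_le (Set.Nonempty.image _ ⟨1 / 2, by norm_num⟩) ?_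
  rintro _ ⟨p, hp, rfl⟩
  exact hC p hp

lemma kappaLLYscale_le [Fintype V] (G : SimpleGraph V) {i : ℕ} {x y : V} (h : G.dist x y = i) :
    kappaLLYscale G i ≤ kappaLLY G x y := by
  refine csInf_le (Set.Finite.bddBelow ?_) ⟨x, y, h, rfl⟩
  refine (Set.finite_range fun e : V × V => kappaLLY G e.1 e.2).subset ?_
  rintro _ ⟨u, v, -, rfl⟩
  exact ⟨(u, v), rfl⟩

/-! ### Vertex cuts -/

/-- `S` separates the graph into the nonempty sides `A` and `B`: the three sets partition the
vertices and there are no edges between `A` and `B`. -/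
structure IsCut (G : SimpleGraph V) (S A B : Finset V) : Prop where
  neA : A.Nonempty
  neB : B.Nonempty
  cover : ∀ v, v ∈ S ∨ v ∈ A ∨ v ∈ B
  disjAB : ∀ v ∈ A, v ∉ B
  disjA : ∀ v ∈ S, v ∉ A
  disjB : ∀ v ∈ S, v ∉ B
  sep : ∀ a ∈ A, ∀ b ∈ B, ¬ G.Adj a b

lemma IsCut.symm {G : SimpleGraph V} {S A B : Finset V} (h : IsCut G S A B) : IsCut G S B A :=
  ⟨h.neB, h.neA, fun v => by have := h.cover v; tauto, fun v hB hA => h.disjAB v hA hB,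
    h.disjB, h.disjA, fun b hb a ha hadj => h.sep a ha b hb hadj.symm⟩

/-- A vertex of `S` without neighbours in `A` can be moved from `S` to `B`. -/
lemma IsCut.move {G : SimpleGraph V} {S A B : Finset V} (h : IsCut G S A B) {s : V}
    (hs : s ∈ S) (hadj : ∀ a ∈ A, ¬ G.Adj s a) : IsCut G (S.erase s) A (insert s B) where
  neA := h.neA
  neB := insert_nonempty _ _
  cover v := by
    have := h.cover v
    rw [mem_erase, mem_insert]
    tauto
  disjAB v hv := by
    rw [mem_insert, not_or]
    exact ⟨fun e => h.disjA s hs (e ▸ hv), h.disjAB v hv⟩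
  disjA v hv := h.disjA v (mem_of_mem_erase hv)
  disjB v hv := by
    rw [mem_insert, not_or]
    exact ⟨ne_of_mem_erase hv, h.disjB v (mem_of_mem_erase hv)⟩
  sep a ha b hb := by
    rcases mem_insert.1 hb with rfl | hb
    · exact fun e => hadj a ha e.symm
    · exact h.sep a ha b hb

lemma IsCut.nonempty {G : SimpleGraph V} {S A B : Finset V} (h : IsCut G S A B)
    (hconn : G.Connected) : S.Nonempty := by
  by_contra hS
  rw [not_nonempty_iff_eq_empty] at hS
  obtain ⟨a, ha⟩ := h.neA
  obtain ⟨b, hb⟩ := h.neB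
  obtain ⟨w⟩ := hconn.preconnected a b
  have : ∀ u v (w : G.Walk u v), u ∈ A → v ∈ A := by
    intro u v w
    induction w with
    | nil => exact id
    | cons hadj w ih =>
      intro hu
      refine ih ?_
      rcases h.cover _ with hv | hv | hv
      · simp [hS] at hv
      · exact hv
      · exact absurd hadj (h.sep _ hu _ hv)
  exact h.disjAB b (this a b w ha) hb

lemma exists_isCut_of_not_connected [Fintype V] (G : SimpleGraph V) (S : Finset V)
    (hne : ((S : Set V)ᶜ).Nonempty) (h : ¬ (G.induce ((S : Set V)ᶜ)).Connected) :
    ∃ A B, IsCut G S A B := by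
  have : Nonempty ((S : Set V)ᶜ : Set V) := hne.to_subtype
  have hp : ¬ (G.induce ((S : Set V)ᶜ)).Preconnected := fun hp => h ⟨hp⟩
  unfold SimpleGraph.Preconnected at hp
  push Not at hp
  obtain ⟨a, b, hab⟩ := hp
  refine ⟨univ.filter fun v => ∃ hv : v ∈ (S : Set V)ᶜ,
      (G.induce ((S : Set V)ᶜ)).Reachable a ⟨v, hv⟩,
    univ.filter fun v => ∃ hv : v ∈ (S : Set V)ᶜ,
      ¬ (G.induce ((S : Set V)ᶜ)).Reachable a ⟨v, hv⟩, ?_, ?_, ?_, ?_, ?_, ?_, ?_⟩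
  · exact ⟨a, mem_filter.2 ⟨mem_univ _, a.2, .refl _⟩⟩
  · exact ⟨b, mem_filter.2 ⟨mem_univ _, b.2, hab⟩⟩
  · intro v
    by_cases hv : v ∈ S
    · exact Or.inl hv
    · have hv' : v ∈ (S : Set V)ᶜ := by simpa using hv
      refine Or.inr ?_
      simp only [mem_filter, mem_univ, true_and]
      by_cases hr : (G.induce ((S : Set V)ᶜ)).Reachable a ⟨v, hv'⟩
      · exact Or.inl ⟨hv', hr⟩
      · exact Or.inr ⟨hv', hr⟩
  · intro v hv hv'
    simp only [mem_filter, mem_univ, true_and] at hv hv'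
    obtain ⟨_, h1⟩ := hv
    obtain ⟨_, h2⟩ := hv'
    exact h2 h1
  · intro v hv hv'
    obtain ⟨-, h1, -⟩ := mem_filter.1 hv'
    exact h1 hv
  · intro v hv hv'
    obtain ⟨-, h1, -⟩ := mem_filter.1 hv'
    exact h1 hv
  · intro u hu v hv hadj
    obtain ⟨-, hu', h1⟩ := mem_filter.1 hu
    obtain ⟨-, hv', h2⟩ := mem_filter.1 hv
    have : (G.induce ((S : Set V)ᶜ)).Adj ⟨u, hu'⟩ ⟨v, hv'⟩ := hadj
    exact h2 (h1.trans this.reachable)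

/-- In a non-complete graph, removing all vertices but two non-adjacent ones is a cut. -/
lemma exists_isCut_of_ne_top [Fintype V] (G : SimpleGraph V) (hnc : G ≠ ⊤) :
    ∃ S A B, IsCut G S A B ∧ S.card + 2 = Fintype.card V := by
  obtain ⟨u, v, huv, hadj⟩ : ∃ u v, u ≠ v ∧ ¬ G.Adj u v := by
    by_contra! h
    exact hnc (by ext u v; exact ⟨fun e => e.ne, fun e => h u v e⟩)
  refine ⟨({u, v} : Finset V)ᶜ, {u}, {v}, ?_, ?_⟩
  · constructor <;> simp_all; grind
  · have := card_compl_add_card ({u, v} : Finset V)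
    rwa [card_pair huv] at this

/-- The vertex connectivity of a non-complete graph is at least the size of some cut which is
of minimum size among all cuts. -/
lemma exists_min_isCut [Fintype V] (G : SimpleGraph V) (hnc : G ≠ ⊤) :
    ∃ S A B, IsCut G S A B ∧ (∀ S' A' B', IsCut G S' A' B' → S.card ≤ S'.card) ∧
      S.card ≤ vertexConnectivity G := by
  obtain ⟨S₀, A₀, B₀, h₀, hc₀⟩ := exists_isCut_of_ne_top G hnc
  have hex : ∃ n, ∃ S A B, IsCut G S A B ∧ S.card = n := ⟨_, S₀, A₀, B₀, h₀, rfl⟩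
  obtain ⟨S, A, B, h, hc⟩ := Nat.find_spec hex
  have hmin : ∀ S' A' B', IsCut G S' A' B' → S.card ≤ S'.card := fun S' A' B' h' =>
    hc ▸ Nat.find_min' hex ⟨S', A', B', h', rfl⟩
  refine ⟨S, A, B, h, hmin, ?_⟩
  refine le_csInf ⟨_, univ, rfl, Or.inr (by simp)⟩ ?_
  rintro _ ⟨T, rfl, hT⟩
  by_cases hsub : ((T : Set V)ᶜ).Subsingleton
  · have h1 : (Tᶜ).card ≤ 1 := by
      rw [card_le_one]
      intro a ha b hb
      exact hsub (by simpa using ha) (by simpa using hb)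
    have h2 := card_compl_add_card T
    have h3 := hmin _ _ _ h₀
    omega
  · obtain ⟨A', B', h'⟩ := exists_isCut_of_not_connected G T
      (Set.not_subsingleton_iff.1 hsub).nonempty (hT.resolve_right hsub)
    exact hmin _ _ _ h'

/-! ### The curvature across a cut -/

/-- The potential of a cut: `1` on the side `A`, `0` on the separating set, `-1` on the side `B`. -/
noncomputable def cutPotential (A B : Finset V) (v : V) : ℝ :=
  (if v ∈ A then 1 else 0) - (if v ∈ B then 1 else 0)

lemma IsCut.cutPotential_lipschitz {G : SimpleGraph V} {S A B : Finset V} (h : IsCut G S A B)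
    (u v : V) (huv : G.Adj u v) : cutPotential A B u - cutPotential A B v ≤ 1 := by
  unfold cutPotential
  have h1 := h.disjAB u
  have h2 := h.sep u
  split_ifs <;> first | (exfalso; tauto) | norm_num

/-- The mean of the potential with respect to `μ_x^p` for `x ∈ A`. -/
lemma IsCut.sum_cutPotential [Fintype V] {G : SimpleGraph V} {S A B : Finset V}
    (h : IsCut G S A B) (p : ℝ) {x : V} (hx : x ∈ A) (hdeg : 0 < G.degree x) :
    ∑ z, cutPotential A B z * muP G p x z
      = 1 - (1 - p) * ((G.neighborFinset x ∩ S).card / G.degree x) := by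
  have hd : (G.degree x : ℝ) ≠ 0 := by exact_mod_cast hdeg.ne'
  have hfx : cutPotential A B x = 1 := by simp [cutPotential, hx, h.disjAB x hx]
  have hsum : ∑ z ∈ G.neighborFinset x, cutPotential A B z
      = G.degree x - (G.neighborFinset x ∩ S).card := by
    have : ∀ z ∈ G.neighborFinset x, cutPotential A B z = 1 - if z ∈ S then 1 else 0 := by
      intro z hz
      rw [SimpleGraph.mem_neighborFinset] at hz
      have hB : z ∉ B := fun hB => h.sep x hx z hB hz
      have hc := h.cover z
      have hA := h.disjA z
      unfold cutPotential
      by_cases hS : z ∈ S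
      · simp [hS, hB, hA hS]
      · simp [hS, hB, (by tauto : z ∈ A)]
    rw [sum_congr rfl this, sum_sub_distrib, sum_const,
      SimpleGraph.card_neighborFinset_eq_degree, sum_boole, filter_mem_eq_inter]
    simp
  rw [sum_mul_muP, hfx, hsum]
  field_simp
  ring

lemma cutPotential_swap (A B : Finset V) (v : V) : cutPotential B A v = -cutPotential A B v := by
  unfold cutPotential
  ring

lemma IsCut.kappaLLY_le [Fintype V] {G : SimpleGraph V} (hconn : G.Connected)
    {S A B : Finset V} (h : IsCut G S A B) {x y : V} (hx : x ∈ A) (hy : y ∈ B)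
    (hxd : 0 < G.degree x) (hyd : 0 < G.degree y) (hd : G.dist x y = 2) :
    kappaLLY G x y ≤ ((G.neighborFinset x ∩ S).card / G.degree x
      + (G.neighborFinset y ∩ S).card / G.degree y) / 2 := by
  refine _root_.kappaLLY_le G (by omega) hxd hyd ?_
  rintro p ⟨hp0, hp1⟩
  have hW := le_Wdist G (exists_plan_muP G hp0.le hp1.le hxd hyd) fun π hπ =>
    duality_le_planCost G hconn h.cutPotential_lipschitz hπ
  have hy' := h.symm.sum_cutPotential p hy hyd
  simp only [cutPotential_swap A B, neg_mul, sum_neg_distrib] at hy'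
  rw [h.sum_cutPotential p hx hxd] at hW
  rw [div_le_iff₀ (by linarith), hd]
  push_cast
  linarith

/-- Across a cut of minimum size there is a pair of vertices at distance two. -/
lemma IsCut.exists_dist_two [Fintype V] {G : SimpleGraph V} (hconn : G.Connected)
    {S A B : Finset V} (h : IsCut G S A B)
    (hmin : ∀ S' A' B', IsCut G S' A' B' → S.card ≤ S'.card) :
    ∃ x ∈ A, ∃ y ∈ B, G.dist x y = 2 ∧ 0 < G.degree x ∧ 0 < G.degree y := by
  obtain ⟨s, hs⟩ := h.nonempty hconn
  have hlt := card_erase_lt_of_mem hs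
  obtain ⟨x, hx, hsx⟩ : ∃ a ∈ A, G.Adj s a := by
    by_contra! hc
    exact absurd (hmin _ _ _ (h.move hs hc)) (by omega)
  obtain ⟨y, hy, hsy⟩ : ∃ b ∈ B, G.Adj s b := by
    by_contra! hc
    exact absurd (hmin _ _ _ (h.symm.move hs hc)) (by omega)
  refine ⟨x, hx, y, hy, ?_, (G.degree_pos_iff_exists_adj x).2 ⟨s, hsx.symm⟩,
    (G.degree_pos_iff_exists_adj y).2 ⟨s, hsy.symm⟩⟩
  have hne : x ≠ y := fun e => h.disjAB x hx (e ▸ hy)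
  have h0 : 0 < G.dist x y := hconn.pos_dist_of_ne hne
  have h1 : G.dist x y ≠ 1 := fun e => h.sep x hx y hy (SimpleGraph.dist_eq_one_iff_adj.1 e)
  have h2 : G.dist x y ≤ 2 :=
    SimpleGraph.dist_le (SimpleGraph.Walk.cons hsx.symm (SimpleGraph.Walk.cons hsy .nil))
  omega

/-- If any two vertices at distance 2 have at most `β` common neighbors, then
`k(G) ≥ 2δ(G)·κ_LLY^{(2)}(G) − β`. -/
theorem connectivity_ge_two_minDegree_mul_kappa_sub_beta
    {V : Type*} [Fintype V] (G : SimpleGraph V)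
    (hconn : G.Connected) (hnc : G ≠ ⊤) (β : ℕ)
    (hβ : ∀ u v : V, G.dist u v = 2 → (G.neighborFinset u ∩ G.neighborFinset v).card ≤ β) :
    2 * (G.minDegree : ℝ) * kappaLLYscale G 2 - (β : ℝ) ≤ (vertexConnectivity G : ℝ) := by
  obtain ⟨S, A, B, h, hmin, hk⟩ := exists_min_isCut G hnc
  obtain ⟨x, hx, y, hy, hd, hxd, hyd⟩ := h.exists_dist_two hconn hmin
  have hκ := (kappaLLYscale_le G hd).trans (h.kappaLLY_le hconn hx hy hxd hyd hd)
  have hcount : (G.neighborFinset x ∩ S).card + (G.neighborFinset y ∩ S).card ≤ S.card + β := by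
    rw [← card_union_add_card_inter]
    refine add_le_add (card_le_card (union_subset inter_subset_right inter_subset_right)) ?_
    exact (card_le_card (inter_subset_inter inter_subset_left inter_subset_left)).trans
      (hβ x y hd)
  have hdiv : ∀ (z : V) (n : ℕ), 0 < G.degree z → (G.minDegree : ℝ) * (n / G.degree z) ≤ n := by
    intro z n hz
    have hz' : (0 : ℝ) < G.degree z := by exact_mod_cast hz
    have hle : (G.minDegree : ℝ) ≤ G.degree z := by exact_mod_cast G.minDegree_le_degree z
    rw [← mul_div_assoc, div_le_iff₀ hz', mul_comm (n : ℝ)]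
    exact mul_le_mul_of_nonneg_right hle n.cast_nonneg
  have hx' := hdiv x (G.neighborFinset x ∩ S).card hxd
  have hy' := hdiv y (G.neighborFinset y ∩ S).card hyd
  have hmul := mul_le_mul_of_nonneg_left hκ (Nat.cast_nonneg (α := ℝ) G.minDegree)
  have hk' : (S.card : ℝ) ≤ vertexConnectivity G := by exact_mod_cast hk
  have hcount' : ((G.neighborFinset x ∩ S).card : ℝ) + (G.neighborFinset y ∩ S).card
      ≤ S.card + β := by exact_mod_cast hcount
  linarith
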